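/- Let S > 0, 0 < δ₁ < S, δ₂ > 0, and let q : (0,S) × Ω → ℝ be continuous and bounded. Let w be continuous on [0,S] × cl(Ω), with ∂_t w and all spatial partial derivatives of w up to order 2 continuous on (0,S) × Ω, satisfying ∂_t w − Δw + q w = 0 pointwise in (0,S) × Ω, w(t,x) ≥ 0 for all (t,x) ∈ [0,S] × cl(Ω), w(0,x) = 0 for all x ∈ cl(Ω), and w(t,x) = δ₂ for all (t,x) ∈ [δ₁,S] × ∂Ω. Then inf { w(t,x) : (t,x) ∈ [δ₁,S] × cl(Ω) } > 0. -/

import Mathlib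

open Set

namespace Paper

noncomputable section

/-- Time derivative `∂ₜu`. -/
def timeDeriv {n : ℕ} (u : ℝ → (Fin n → ℝ) → ℝ) (t : ℝ) (x : Fin n → ℝ) : ℝ :=
  deriv (fun s => u s x) t

/-- Spatial partial derivative `∂ᵢu`. -/
def spatialDeriv {n : ℕ} (u : ℝ → (Fin n → ℝ) → ℝ) (i : Fin n) (t : ℝ) (x : Fin n → ℝ) : ℝ :=
  deriv (fun s => u t (Function.update x i s)) (x i)

/-- Second spatial partial derivative `∂ᵢ∂ⱼu`. -/
def spatialDeriv2 {n : ℕ} (u : ℝ → (Fin n → ℝ) → ℝ) (i j : Fin n) (t : ℝ)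
    (x : Fin n → ℝ) : ℝ :=
  spatialDeriv (spatialDeriv u j) i t x

/-- Laplacian in the space variables. -/
def laplacian {n : ℕ} (u : ℝ → (Fin n → ℝ) → ℝ) (t : ℝ) (x : Fin n → ℝ) : ℝ :=
  ∑ i, spatialDeriv2 u i i t x

/-- Parabolic regularity: `u` is continuous on `[0,S] × cl Ω`, and `∂ₜu` together with all
spatial partial derivatives of `u` up to order 2 exist and are continuous on `(0,S) × Ω`. -/
structure ParabolicRegular {n : ℕ} (Ω : Set (Fin n → ℝ)) (S : ℝ)
    (u : ℝ → (Fin n → ℝ) → ℝ) : Prop where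
  cont : ContinuousOn (fun p : ℝ × (Fin n → ℝ) => u p.1 p.2) (Icc 0 S ×ˢ closure Ω)
  diff_t : ∀ t ∈ Ioo 0 S, ∀ x ∈ Ω, DifferentiableAt ℝ (fun s => u s x) t
  diff_x : ∀ t ∈ Ioo 0 S, ∀ x ∈ Ω, ∀ i,
    DifferentiableAt ℝ (fun s => u t (Function.update x i s)) (x i)
  diff_xx : ∀ t ∈ Ioo 0 S, ∀ x ∈ Ω, ∀ i j,
    DifferentiableAt ℝ (fun s => spatialDeriv u j t (Function.update x i s)) (x i)
  cont_t : ContinuousOn (fun p : ℝ × (Fin n → ℝ) => timeDeriv u p.1 p.2) (Ioo 0 S ×ˢ Ω)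
  cont_x : ∀ i, ContinuousOn (fun p : ℝ × (Fin n → ℝ) => spatialDeriv u i p.1 p.2)
    (Ioo 0 S ×ˢ Ω)
  cont_xx : ∀ i j, ContinuousOn (fun p : ℝ × (Fin n → ℝ) => spatialDeriv2 u i j p.1 p.2)
    (Ioo 0 S ×ˢ Ω)

/-- Classical solution of `∂ₜu − Δu + c u = f` in `(0,S) × Ω` with lateral boundary values `g`
and zero initial values. -/
structure IsClassicalSolution {n : ℕ} (Ω : Set (Fin n → ℝ)) (S : ℝ)
    (c f g u : ℝ → (Fin n → ℝ) → ℝ) extends ParabolicRegular Ω S u : Prop where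
  eqn : ∀ t ∈ Ioo 0 S, ∀ x ∈ Ω, timeDeriv u t x - laplacian u t x + c t x * u t x = f t x
  lateral : ∀ t ∈ Icc 0 S, ∀ x ∈ frontier Ω, u t x = g t x
  initial : ∀ x ∈ closure Ω, u 0 x = 0

/-- `∂_u F` for a semilinear term `F(t,x,u)`. -/
def uDeriv {n : ℕ} (F : ℝ → (Fin n → ℝ) → ℝ → ℝ) (t : ℝ) (x : Fin n → ℝ) (u : ℝ) : ℝ :=
  deriv (F t x) u

/-- `∂_u² F`. -/
def uDeriv2 {n : ℕ} (F : ℝ → (Fin n → ℝ) → ℝ → ℝ) : ℝ → (Fin n → ℝ) → ℝ → ℝ :=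
  uDeriv (uDeriv F)

/-- `∂_u³ F`. -/
def uDeriv3 {n : ℕ} (F : ℝ → (Fin n → ℝ) → ℝ → ℝ) : ℝ → (Fin n → ℝ) → ℝ → ℝ :=
  uDeriv (uDeriv2 F)

/-- `∂_u⁴ F`. -/
def uDeriv4 {n : ℕ} (F : ℝ → (Fin n → ℝ) → ℝ → ℝ) : ℝ → (Fin n → ℝ) → ℝ → ℝ :=
  uDeriv (uDeriv3 F)

/-- `∂ₜF` for `F` depending on `(t,x,u)`. -/
def FtDeriv {n : ℕ} (F : ℝ → (Fin n → ℝ) → ℝ → ℝ) (t : ℝ) (x : Fin n → ℝ) (u : ℝ) : ℝ :=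
  deriv (fun s => F s x u) t

/-- `∂_{xᵢ}F` for `F` depending on `(t,x,u)`. -/
def FxDeriv {n : ℕ} (F : ℝ → (Fin n → ℝ) → ℝ → ℝ) (i : Fin n) (t : ℝ) (x : Fin n → ℝ)
    (u : ℝ) : ℝ :=
  deriv (fun s => F t (Function.update x i s) u) (x i)

/-- `F` is continuous on `[0,S] × cl Ω × ℝ` and continuously differentiable in the last
variable. -/
def C1InU {n : ℕ} (Ω : Set (Fin n → ℝ)) (S : ℝ) (F : ℝ → (Fin n → ℝ) → ℝ → ℝ) : Prop :=
  ContinuousOn (fun p : ℝ × (Fin n → ℝ) × ℝ => F p.1 p.2.1 p.2.2)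
    (Icc 0 S ×ˢ closure Ω ×ˢ (univ : Set ℝ)) ∧
  (∀ t ∈ Icc 0 S, ∀ x ∈ closure Ω, ∀ u : ℝ, DifferentiableAt ℝ (F t x) u) ∧
  ContinuousOn (fun p : ℝ × (Fin n → ℝ) × ℝ => uDeriv F p.1 p.2.1 p.2.2)
    (Icc 0 S ×ˢ closure Ω ×ˢ (univ : Set ℝ))

/-- `F` is continuous and twice continuously differentiable in the last variable. -/
def C2InU {n : ℕ} (Ω : Set (Fin n → ℝ)) (S : ℝ) (F : ℝ → (Fin n → ℝ) → ℝ → ℝ) : Prop :=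
  C1InU Ω S F ∧
  (∀ t ∈ Icc 0 S, ∀ x ∈ closure Ω, ∀ u : ℝ, DifferentiableAt ℝ (uDeriv F t x) u) ∧
  ContinuousOn (fun p : ℝ × (Fin n → ℝ) × ℝ => uDeriv2 F p.1 p.2.1 p.2.2)
    (Icc 0 S ×ˢ closure Ω ×ˢ (univ : Set ℝ))

/-- `‖f‖_{W^{1,∞}} ≤ B` on `[0,S] × cl Ω`, stated componentwise: `f`, `∂ₜf` and all `∂ᵢf`
are bounded by `B` in absolute value. -/
def W1infLE {n : ℕ} (Ω : Set (Fin n → ℝ)) (S : ℝ) (f : ℝ → (Fin n → ℝ) → ℝ) (B : ℝ) : Prop :=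
  ∀ t ∈ Icc 0 S, ∀ x ∈ closure Ω,
    |f t x| ≤ B ∧ |timeDeriv f t x| ≤ B ∧ ∀ i, |spatialDeriv f i t x| ≤ B

/-- `f` has bounded continuous first-order derivatives on `[0,S] × cl Ω`. -/
def C1Bounded {n : ℕ} (Ω : Set (Fin n → ℝ)) (S : ℝ) (f : ℝ → (Fin n → ℝ) → ℝ) : Prop :=
  (∀ t ∈ Icc 0 S, ∀ x ∈ closure Ω, DifferentiableAt ℝ (fun s => f s x) t ∧
    ∀ i, DifferentiableAt ℝ (fun s => f t (Function.update x i s)) (x i)) ∧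
  ContinuousOn (fun p : ℝ × (Fin n → ℝ) => f p.1 p.2) (Icc 0 S ×ˢ closure Ω) ∧
  ContinuousOn (fun p : ℝ × (Fin n → ℝ) => timeDeriv f p.1 p.2) (Icc 0 S ×ˢ closure Ω) ∧
  (∀ i, ContinuousOn (fun p : ℝ × (Fin n → ℝ) => spatialDeriv f i p.1 p.2)
    (Icc 0 S ×ˢ closure Ω)) ∧
  ∃ B, W1infLE Ω S f B

/-- Componentwise bound `‖f‖_* ≤ ε` for the parabolic Schauder norm of
`C([0,S];C^{2+α}(cl Ω)) ∩ C^{1+α/2}([0,S];C(cl Ω))`: sup bounds on `f`, `∂ₜf`, spatial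
derivatives up to order 2, the `α`-Hölder (in `x`) seminorms of the second spatial derivatives,
and the `α/2`-Hölder (in `t`) seminorm of `∂ₜf`. -/
def SchauderLE {n : ℕ} (α : ℝ) (Ω : Set (Fin n → ℝ)) (S : ℝ) (f : ℝ → (Fin n → ℝ) → ℝ)
    (ε : ℝ) : Prop :=
  (∀ t ∈ Icc 0 S, ∀ x ∈ closure Ω,
    |f t x| ≤ ε ∧ |timeDeriv f t x| ≤ ε ∧ (∀ i, |spatialDeriv f i t x| ≤ ε) ∧
    ∀ i j, |spatialDeriv2 f i j t x| ≤ ε) ∧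
  (∀ t ∈ Icc 0 S, ∀ x ∈ closure Ω, ∀ x' ∈ closure Ω, ∀ i j,
    |spatialDeriv2 f i j t x - spatialDeriv2 f i j t x'| ≤ ε * dist x x' ^ α) ∧
  (∀ x ∈ closure Ω, ∀ t ∈ Icc 0 S, ∀ t' ∈ Icc 0 S,
    |timeDeriv f t x - timeDeriv f t' x| ≤ ε * |t - t'| ^ (α / 2))

/-- `G`, `∂ₜG` and the `∂_{xᵢ}G` exist and are continuous on `[0,S] × cl Ω × ℝ`. -/
def C1InTX {n : ℕ} (Ω : Set (Fin n → ℝ)) (S : ℝ) (G : ℝ → (Fin n → ℝ) → ℝ → ℝ) : Prop :=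
  (∀ t ∈ Icc 0 S, ∀ x ∈ closure Ω, ∀ u : ℝ,
    DifferentiableAt ℝ (fun s => G s x u) t ∧
    ∀ i, DifferentiableAt ℝ (fun s => G t (Function.update x i s) u) (x i)) ∧
  ContinuousOn (fun p : ℝ × (Fin n → ℝ) × ℝ => G p.1 p.2.1 p.2.2)
    (Icc 0 S ×ˢ closure Ω ×ˢ (univ : Set ℝ)) ∧
  ContinuousOn (fun p : ℝ × (Fin n → ℝ) × ℝ => FtDeriv G p.1 p.2.1 p.2.2)
    (Icc 0 S ×ˢ closure Ω ×ˢ (univ : Set ℝ)) ∧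
  ∀ i, ContinuousOn (fun p : ℝ × (Fin n → ℝ) × ℝ => FxDeriv G i p.1 p.2.1 p.2.2)
    (Icc 0 S ×ˢ closure Ω ×ˢ (univ : Set ℝ))

/-- `G`, `∂ₜG` and the `∂_{xᵢ}G` are bounded by `κ(|u|)` on `[0,S] × cl Ω`, for every `u`. -/
def BoundedByKappa {n : ℕ} (Ω : Set (Fin n → ℝ)) (S : ℝ) (G : ℝ → (Fin n → ℝ) → ℝ → ℝ)
    (κ : ℝ → ℝ) : Prop :=
  ∀ u : ℝ, ∀ t ∈ Icc 0 S, ∀ x ∈ closure Ω,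
    |G t x u| ≤ κ |u| ∧ |FtDeriv G t x u| ≤ κ |u| ∧ ∀ i, |FxDeriv G i t x u| ≤ κ |u|

/-- The family of solutions of the semilinear problem with boundary data `λχ`, together with
its first and second linearizations in the boundary parameter `λ`. -/
structure SemilinearFamily {n : ℕ} (Ω : Set (Fin n → ℝ)) (S r : ℝ)
    (χ : ℝ → (Fin n → ℝ) → ℝ) (F : ℝ → (Fin n → ℝ) → ℝ → ℝ)
    (v v1 v2 : ℝ → ℝ → (Fin n → ℝ) → ℝ) : Prop where
  sol : ∀ lam ∈ Icc (-r) r, IsClassicalSolution Ω S (fun _ _ => (0 : ℝ))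
      (fun t x => -F t x (v lam t x)) (fun t x => lam * χ t x) (v lam)
  zero : ∀ t ∈ Icc 0 S, ∀ x ∈ closure Ω, v 0 t x = 0
  lin1 : ∀ lam ∈ Icc (-r) r, IsClassicalSolution Ω S
      (fun t x => uDeriv F t x (v lam t x)) (fun _ _ => (0 : ℝ)) χ (v1 lam)
  lin2 : ∀ lam ∈ Icc (-r) r, IsClassicalSolution Ω S
      (fun t x => uDeriv F t x (v lam t x))
      (fun t x => -uDeriv2 F t x (v lam t x) * (v1 lam t x) ^ 2) (fun _ _ => (0 : ℝ)) (v2 lam)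
  cont_lam : ∀ t ∈ Icc 0 S, ∀ x ∈ closure Ω, ContinuousOn (fun lam => v lam t x) (Icc (-r) r)
  deriv1 : ∀ t ∈ Icc 0 S, ∀ x ∈ closure Ω, ∀ lam ∈ Ioo (-r) r,
      HasDerivAt (fun μ => v μ t x) (v1 lam t x) lam
  deriv2 : ∀ t ∈ Icc 0 S, ∀ x ∈ closure Ω, ∀ lam ∈ Ioo (-r) r,
      HasDerivAt (fun μ => v1 μ t x) (v2 lam t x) lam

end

end Paper

open Paper Set

/-!
Only an upper bound `q ≤ C` matters: since `w ≥ 0`, it makes `w` a supersolution of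
`∂ₜw - Δw + C w = 0`. If such a `w` is positive at an interior point `(s, y)`, it dominates the
barrier `κ exp (-μ (t - s)) (ε + a (t - s) - |x - y|²)²` on the expanding paraboloid
`|x - y|² ≤ ε + a (t - s)`: this function vanishes on the lateral boundary and is a strict
subsolution once `μ` is large. Hence positivity spreads, at every later time, to each ball around
`y` contained in `Ω`, and then to the whole connected component of `y`. Every component of a
bounded open set has a boundary point on `∂Ω`, near which `w` is positive shortly before time `δ₁`;
so `w > 0` on the compact set `[δ₁, S] × cl Ω`.
-/

namespace Paper

open Filter Topology

theorem deriv_nonpos_of_isLocalMinOn_Iic {f : ℝ → ℝ} {t : ℝ} (hf : DifferentiableAt ℝ f t)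
    (hmin : IsLocalMinOn f (Iic t) t) : deriv f t ≤ 0 := by
  have hcone : (-1 : ℝ) ∈ posTangentConeAt (Iic t) t := by
    refine mem_posTangentConeAt_of_segment_subset ((convex_Iic t).segment_subset self_mem_Iic ?_)
    simp
  simpa using hmin.hasFDerivWithinAt_nonneg hf.hasFDerivAt.hasFDerivWithinAt hcone

theorem deriv_deriv_nonneg_of_isLocalMin {f : ℝ → ℝ} {a : ℝ} (hf : ContinuousAt f a)
    (hmin : IsLocalMin f a) : 0 ≤ deriv (deriv f) a := by
  by_contra! hneg
  have hmax : IsLocalMax f a := isLocalMax_of_deriv_deriv_neg hneg hmin.deriv_eq_zero hf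
  have hconst : f =ᶠ[𝓝 a] fun _ => f a := by
    filter_upwards [hmin, hmax] with x hle hge using le_antisymm hge hle
  have hzero : deriv (deriv f) a = 0 := by simpa using hconst.deriv.deriv_eq
  exact hneg.ne hzero

theorem deriv_deriv_le_of_isLocalMin_sub {f g : ℝ → ℝ} {a : ℝ}
    (hf : ∀ᶠ σ in 𝓝 a, DifferentiableAt ℝ f σ) (hf' : DifferentiableAt ℝ (deriv f) a)
    (hg : ∀ᶠ σ in 𝓝 a, DifferentiableAt ℝ g σ) (hg' : DifferentiableAt ℝ (deriv g) a)
    (hmin : IsLocalMin (fun σ => f σ - g σ) a) : deriv (deriv g) a ≤ deriv (deriv f) a := by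
  have hderiv : deriv (fun σ => f σ - g σ) =ᶠ[𝓝 a] fun σ => deriv f σ - deriv g σ := by
    filter_upwards [hf, hg] with σ hfσ hgσ using deriv_fun_sub hfσ hgσ
  have hnonneg := deriv_deriv_nonneg_of_isLocalMin
    (hf.self_of_nhds.continuousAt.fun_sub hg.self_of_nhds.continuousAt) hmin
  rw [hderiv.deriv_eq, deriv_fun_sub hf' hg'] at hnonneg
  exact sub_nonneg.1 hnonneg

theorem exists_forall_mul_lt_mul_sq_add (K : ℝ) {c : ℝ} (hc : 0 < c) :
    ∃ μ : ℝ, ∀ d : ℝ, K * d < μ * d ^ 2 + c := by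
  refine ⟨K ^ 2 / (2 * c), fun d => ?_⟩
  have hsq : K ^ 2 / (2 * c) * d ^ 2 + c - K * d = ((K * d - c) ^ 2 + c ^ 2) / (2 * c) := by
    field_simp
    ring
  have hpos : 0 < ((K * d - c) ^ 2 + c ^ 2) / (2 * c) := by positivity
  linarith

theorem frontier_connectedComponentIn_subset {X : Type*} [TopologicalSpace X]
    [LocallyConnectedSpace X] {U : Set X} (hU : IsOpen U) (x : X) :
    frontier (connectedComponentIn U x) ⊆ frontier U := by
  intro z hz
  refine ⟨closure_mono (connectedComponentIn_subset U x) hz.1, fun hzU => hz.2 ?_⟩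
  rw [hU.interior_eq] at hzU
  obtain ⟨u, huz, hux⟩ := mem_closure_iff.1 hz.1 _ hU.connectedComponentIn
    (mem_connectedComponentIn hzU)
  rw [hU.connectedComponentIn.interior_eq, connectedComponentIn_eq hux,
    ← connectedComponentIn_eq huz]
  exact mem_connectedComponentIn hzU

theorem exists_mem_frontier_mem_closure_connectedComponentIn {E : Type*} [NormedAddCommGroup E]
    [NormedSpace ℝ E] [Nontrivial E] {U : Set E} (hU : IsOpen U) (hUb : Bornology.IsBounded U)
    {x : E} (hx : x ∈ U) : ∃ z ∈ frontier U, z ∈ closure (connectedComponentIn U x) := by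
  have hne_univ : connectedComponentIn U x ≠ univ := fun huniv =>
    NormedSpace.unbounded_univ ℝ E (huniv ▸ hUb.subset (connectedComponentIn_subset U x))
  obtain ⟨z, hz⟩ := nonempty_frontier_iff.2 ⟨⟨x, mem_connectedComponentIn hx⟩, hne_univ⟩
  exact ⟨z, frontier_connectedComponentIn_subset hU x hz, hz.1⟩

theorem exists_pos_of_mem_closure {X : Type*} [TopologicalSpace X] {s : Set X} {f : X → ℝ} {p : X}
    (hp : p ∈ closure s) (hf : ContinuousWithinAt f s p) (hpos : 0 < f p) : ∃ z ∈ s, 0 < f z := by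
  have : (𝓝[s] p).NeBot := mem_closure_iff_nhdsWithin_neBot.1 hp
  exact (eventually_mem_nhdsWithin.and (hf.eventually_const_lt hpos)).exists

theorem sInf_image_pos_of_isCompact {X : Type*} [TopologicalSpace X] {K : Set X} {f : X → ℝ}
    (hK : IsCompact K) (hne : K.Nonempty) (hf : ContinuousOn f K) (hpos : ∀ p ∈ K, 0 < f p) :
    0 < sInf (f '' K) := by
  obtain ⟨p, hp, hpf⟩ := (hK.image_of_continuousOn hf).sInf_mem (hne.image f)
  exact hpf ▸ hpos p hp

variable {n : ℕ}

/-- Squared Euclidean distance; the norm of `Fin n → ℝ` itself is the sup norm. -/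
def sqDist (y x : Fin n → ℝ) : ℝ := ∑ i, (x i - y i) ^ 2

theorem sqDist_self (y : Fin n → ℝ) : sqDist y y = 0 := by simp [sqDist]

theorem sqDist_nonneg (y x : Fin n → ℝ) : 0 ≤ sqDist y x := Finset.sum_nonneg fun _ _ => sq_nonneg _

theorem sqDist_comm (y x : Fin n → ℝ) : sqDist y x = sqDist x y :=
  Finset.sum_congr rfl fun _ _ => by ring

theorem contDiff_sqDist (y : Fin n → ℝ) : ContDiff ℝ 2 (sqDist y) := by
  unfold sqDist
  fun_prop

theorem sqDist_update (y x : Fin n → ℝ) (i : Fin n) (σ : ℝ) :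
    sqDist y (Function.update x i σ) = sqDist y x - (x i - y i) ^ 2 + (σ - y i) ^ 2 := by
  have hother : ∑ j ∈ Finset.univ.erase i, (Function.update x i σ j - y j) ^ 2 =
      ∑ j ∈ Finset.univ.erase i, (x j - y j) ^ 2 :=
    Finset.sum_congr rfl fun j hj => by rw [Function.update_of_ne (Finset.ne_of_mem_erase hj)]
  rw [sqDist, sqDist, ← Finset.add_sum_erase _ _ (Finset.mem_univ i),
    ← Finset.add_sum_erase _ (fun j => (x j - y j) ^ 2) (Finset.mem_univ i), hother,
    Function.update_self]
  ring

theorem dist_le_of_sqDist_le {y x : Fin n → ℝ} {R : ℝ} (hR : 0 ≤ R) (h : sqDist y x ≤ R ^ 2) :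
    dist x y ≤ R := by
  refine (dist_pi_le_iff hR).2 fun i => abs_le_of_sq_le_sq (le_trans ?_ h) hR
  exact Finset.single_le_sum (f := fun i => (x i - y i) ^ 2) (fun _ _ => sq_nonneg _)
    (Finset.mem_univ i)

theorem eventually_sqDist_lt (y : Fin n → ℝ) {c : ℝ} (hc : 0 < c) : ∀ᶠ x in 𝓝 y, sqDist y x < c :=
  (contDiff_sqDist y).continuous.continuousAt.eventually_lt_const (by rwa [sqDist_self])

theorem exists_eventually_sqDist_lt_of_mem_nhds {x : Fin n → ℝ} {U : Set (Fin n → ℝ)}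
    (hU : U ∈ 𝓝 x) : ∃ M > 0, ∀ᶠ z in 𝓝 x, sqDist x z < M ∧ ∀ v, sqDist z v ≤ M → v ∈ U := by
  obtain ⟨r, hr, hrU⟩ := Metric.nhds_basis_closedBall.mem_iff.1 hU
  refine ⟨(r / 2) ^ 2, by positivity, ?_⟩
  filter_upwards [eventually_sqDist_lt x (c := (r / 2) ^ 2) (by positivity)] with z hz
  refine ⟨hz, fun v hv => hrU ?_⟩
  have hzx : dist z x ≤ r / 2 := dist_le_of_sqDist_le (by positivity) hz.le
  have hvz : dist v z ≤ r / 2 := dist_le_of_sqDist_le (by positivity) hv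
  rw [Metric.mem_closedBall]
  linarith [dist_triangle v z x]

/-- Pointwise regularity at `(t, x)` making `∂ₜu` and `Δu` genuine derivatives there:
differentiability in time, and twice differentiability along each coordinate line through `x`. -/
structure ParabolicDiffAt (u : ℝ → (Fin n → ℝ) → ℝ) (t : ℝ) (x : Fin n → ℝ) : Prop where
  time : DifferentiableAt ℝ (fun τ => u τ x) t
  space : ∀ i, ∀ᶠ σ in 𝓝 (x i), DifferentiableAt ℝ (fun σ => u t (Function.update x i σ)) σ
  space₂ : ∀ i, DifferentiableAt ℝ (deriv fun σ => u t (Function.update x i σ)) (x i)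

theorem deriv_comp_update (u : ℝ → (Fin n → ℝ) → ℝ) (t : ℝ) (x : Fin n → ℝ) (i : Fin n) :
    deriv (fun σ => u t (Function.update x i σ)) =
      fun σ => spatialDeriv u i t (Function.update x i σ) := by
  ext σ
  simp [spatialDeriv]

theorem spatialDeriv2_self (u : ℝ → (Fin n → ℝ) → ℝ) (t : ℝ) (x : Fin n → ℝ) (i : Fin n) :
    spatialDeriv2 u i i t x = deriv (deriv fun σ => u t (Function.update x i σ)) (x i) := by
  rw [deriv_comp_update, spatialDeriv2, spatialDeriv]

theorem ParabolicDiffAt.of_contDiff {u : ℝ → (Fin n → ℝ) → ℝ}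
    (hu : ContDiff ℝ 2 (Function.uncurry u)) (t : ℝ) (x : Fin n → ℝ) : ParabolicDiffAt u t x := by
  have hspace (i : Fin n) : ContDiff ℝ 2 fun σ => u t (Function.update x i σ) :=
    hu.comp (contDiff_const.prodMk (contDiff_update 2 x i))
  have htime : ContDiff ℝ 2 fun τ => u τ x := hu.comp (contDiff_id.prodMk contDiff_const)
  exact ⟨htime.differentiable two_ne_zero t,
    fun i => .of_forall ((hspace i).differentiable two_ne_zero),
    fun i => (hspace i).differentiable_deriv_two _⟩

theorem ParabolicRegular.parabolicDiffAt {Ω : Set (Fin n → ℝ)} (hΩ : IsOpen Ω) {S : ℝ}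
    {u : ℝ → (Fin n → ℝ) → ℝ} (hu : ParabolicRegular Ω S u) {t : ℝ} (ht : t ∈ Ioo 0 S)
    {x : Fin n → ℝ} (hx : x ∈ Ω) : ParabolicDiffAt u t x where
  time := hu.diff_t t ht x hx
  space i := by
    have hΩx : Ω ∈ 𝓝 (Function.update x i (x i)) := by
      rw [Function.update_eq_self]
      exact hΩ.mem_nhds hx
    have hline : Continuous fun σ : ℝ => Function.update x i σ := by fun_prop
    filter_upwards [hline.continuousAt.preimage_mem_nhds hΩx] with σ hσ
    simpa using hu.diff_x t ht _ hσ i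
  space₂ i := by
    rw [deriv_comp_update]
    exact hu.diff_xx t ht x hx i i

theorem timeDeriv_sub_laplacian_le_of_isLocalMin {w φ : ℝ → (Fin n → ℝ) → ℝ} {t : ℝ}
    {x : Fin n → ℝ} (hw : ParabolicDiffAt w t x) (hφ : ParabolicDiffAt φ t x)
    (htime : IsLocalMinOn (fun τ => w τ x - φ τ x) (Iic t) t)
    (hspace : IsLocalMin (fun z => w t z - φ t z) x) :
    timeDeriv w t x - laplacian w t x ≤ timeDeriv φ t x - laplacian φ t x := by
  have hderiv_t : timeDeriv w t x ≤ timeDeriv φ t x := by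
    have hnonpos := deriv_nonpos_of_isLocalMinOn_Iic (hw.time.fun_sub hφ.time) htime
    rw [deriv_fun_sub hw.time hφ.time] at hnonpos
    exact sub_nonpos.1 hnonpos
  have hlaplacian : laplacian φ t x ≤ laplacian w t x := by
    refine Finset.sum_le_sum fun i _ => ?_
    rw [spatialDeriv2_self, spatialDeriv2_self]
    refine deriv_deriv_le_of_isLocalMin_sub (hw.space i) (hw.space₂ i) (hφ.space i) (hφ.space₂ i) ?_
    have hline : Continuous fun σ : ℝ => Function.update x i σ := by fun_prop
    have hmin : IsLocalMin (fun z => w t z - φ t z) (Function.update x i (x i)) := by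
      rwa [Function.update_eq_self]
    exact hmin.comp_continuous hline.continuousAt
  linarith

/-- The points of `D` at which the parabolic minimum principle applies: `D` contains a
neighbourhood of the point in its time slice, and its immediate past. -/
def parabolicInterior (D : Set (ℝ × (Fin n → ℝ))) : Set (ℝ × (Fin n → ℝ)) :=
  {p | (∀ᶠ τ in 𝓝[≤] p.1, (τ, p.2) ∈ D) ∧ ∀ᶠ z in 𝓝 p.2, (p.1, z) ∈ D}

theorem le_of_parabolic_comparison {D : Set (ℝ × (Fin n → ℝ))} (hD : IsCompact D) {C : ℝ}
    (hC : 0 ≤ C) {w φ : ℝ → (Fin n → ℝ) → ℝ}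
    (hcont : ContinuousOn (fun p : ℝ × (Fin n → ℝ) => w p.1 p.2 - φ p.1 p.2) D)
    (hlt : ∀ t x, (t, x) ∈ D → w t x < φ t x → (t, x) ∈ parabolicInterior D ∧
      ParabolicDiffAt w t x ∧ ParabolicDiffAt φ t x ∧
      timeDeriv φ t x - laplacian φ t x + C * φ t x <
        timeDeriv w t x - laplacian w t x + C * w t x) :
    ∀ t x, (t, x) ∈ D → φ t x ≤ w t x := by
  intro t₀ x₀ h₀
  obtain ⟨⟨t, x⟩, hp, hmin⟩ := hD.exists_isMinOn ⟨_, h₀⟩ hcont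
  refine sub_nonneg.1 ((sub_nonneg.2 ?_).trans (hmin h₀))
  change φ t x ≤ w t x
  by_contra! hneg
  obtain ⟨⟨hpast, hslice⟩, hw, hφ, hstrict⟩ := hlt t x hp hneg
  have hderiv := timeDeriv_sub_laplacian_le_of_isLocalMin hw hφ
    (by filter_upwards [hpast] with τ hτ using hmin hτ)
    (by filter_upwards [hslice] with z hz using hmin hz)
  have hzero : C * w t x ≤ C * φ t x := mul_le_mul_of_nonneg_left hneg.le hC
  linarith

/-- `A(t) (ρ(t) - |x - y|²)²`, a barrier vanishing to second order on the moving sphere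
`|x - y|² = ρ(t)`. -/
def radialBarrier (A ρ : ℝ → ℝ) (y : Fin n → ℝ) (t : ℝ) (x : Fin n → ℝ) : ℝ :=
  A t * (ρ t - sqDist y x) ^ 2

theorem contDiff_radialBarrier {A ρ : ℝ → ℝ} (hA : ContDiff ℝ 2 A) (hρ : ContDiff ℝ 2 ρ)
    (y : Fin n → ℝ) : ContDiff ℝ 2 (Function.uncurry (radialBarrier A ρ y)) :=
  (hA.comp contDiff_fst).mul
    (((hρ.comp contDiff_fst).sub ((contDiff_sqDist y).comp contDiff_snd)).pow 2)

theorem timeDeriv_radialBarrier {A ρ : ℝ → ℝ} {A' ρ' t : ℝ} (hA : HasDerivAt A A' t)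
    (hρ : HasDerivAt ρ ρ' t) (y x : Fin n → ℝ) :
    timeDeriv (radialBarrier A ρ y) t x =
      A' * (ρ t - sqDist y x) ^ 2 + 2 * A t * (ρ t - sqDist y x) * ρ' := by
  have h := hA.fun_mul ((hρ.sub_const (sqDist y x)).fun_pow 2)
  refine h.deriv.trans ?_
  push_cast
  ring

theorem deriv_deriv_mul_sub_sq_sq (A k b σ : ℝ) :
    deriv (deriv fun σ : ℝ => A * (k - (σ - b) ^ 2) ^ 2) σ =
      A * (8 * (σ - b) ^ 2 - 4 * (k - (σ - b) ^ 2)) := by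
  have hsq (σ : ℝ) : HasDerivAt (fun σ : ℝ => k - (σ - b) ^ 2) (-(2 * (σ - b))) σ := by
    simpa using (((hasDerivAt_id σ).sub_const b).fun_pow 2).const_sub k
  have hfirst : (deriv fun σ : ℝ => A * (k - (σ - b) ^ 2) ^ 2) =
      fun σ => A * (2 * (k - (σ - b) ^ 2) * -(2 * (σ - b))) := by
    ext σ
    simpa using (((hsq σ).fun_pow 2).const_mul A).deriv
  rw [hfirst]
  have hlin : HasDerivAt (fun σ : ℝ => -(2 * (σ - b))) (-(2 * 1)) σ :=
    (((hasDerivAt_id σ).sub_const b).const_mul 2).fun_neg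
  refine ((((hsq σ).const_mul 2).fun_mul hlin).const_mul A).deriv.trans ?_
  ring

theorem laplacian_radialBarrier (A ρ : ℝ → ℝ) (y : Fin n → ℝ) (t : ℝ) (x : Fin n → ℝ) :
    laplacian (radialBarrier A ρ y) t x =
      A t * (8 * sqDist y x - 4 * n * (ρ t - sqDist y x)) := by
  have hline (i : Fin n) : (fun σ => radialBarrier A ρ y t (Function.update x i σ)) =
      fun σ => A t * (ρ t - (sqDist y x - (x i - y i) ^ 2) - (σ - y i) ^ 2) ^ 2 := by
    ext σ
    rw [radialBarrier, sqDist_update]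
    ring
  have hsecond (i : Fin n) : spatialDeriv2 (radialBarrier A ρ y) i i t x =
      A t * (8 * (x i - y i) ^ 2 - 4 * (ρ t - sqDist y x)) := by
    rw [spatialDeriv2_self, hline, deriv_deriv_mul_sub_sq_sq]
    ring
  simp only [laplacian, hsecond, ← Finset.mul_sum, Finset.sum_sub_distrib, Finset.sum_const,
    Finset.card_univ, Fintype.card_fin, nsmul_eq_mul]
  rw [sqDist]
  ring

theorem exists_radialBarrier_strictSubsolution (n : ℕ) (C s : ℝ) {ε a : ℝ} (hε : 0 < ε)
    (ha : 0 ≤ a) :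
    ∃ μ : ℝ, ∀ κ > 0, ∀ (y : Fin n → ℝ) (t : ℝ) (x : Fin n → ℝ), s ≤ t →
      let φ := radialBarrier (fun t => κ * Real.exp (-μ * (t - s))) (fun t => ε + a * (t - s)) y
      timeDeriv φ t x - laplacian φ t x + C * φ t x < 0 := by
  obtain ⟨μ, hμ⟩ := exists_forall_mul_lt_mul_sq_add (8 + 4 * n + 2 * a) (c := 8 * ε) (by positivity)
  refine ⟨C + μ, fun κ hκ y t x hst => ?_⟩
  intro φ
  have hlin : HasDerivAt (fun t : ℝ => t - s) 1 t := (hasDerivAt_id t).sub_const s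
  rw [timeDeriv_radialBarrier (((hlin.const_mul (-(C + μ))).exp).const_mul κ)
    ((hlin.const_mul a).const_add ε), laplacian_radialBarrier]
  simp only [φ, radialBarrier]
  set G := κ * Real.exp (-(C + μ) * (t - s)) with hG
  set d := ε + a * (t - s) - sqDist y x
  have hGpos : 0 < G := by positivity
  have hradius : ε ≤ d + sqDist y x := by
    linarith [mul_nonneg ha (sub_nonneg.2 hst)]
  have hfactor : (8 + 4 * n + 2 * a) * d - μ * d ^ 2 - 8 * (d + sqDist y x) < 0 := by
    linarith [hμ d]
  calc _ = G * ((8 + 4 * n + 2 * a) * d - μ * d ^ 2 - 8 * (d + sqDist y x)) := by rw [hG]; ring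
    _ < 0 := mul_neg_of_pos_of_neg hGpos hfactor

/-- `w` is a nonnegative classical supersolution of `∂ₜw - Δw + C w = 0` in `(0,S) × Ω`, continuous
up to the final time `S`. -/
structure IsNonnegSupersolution (Ω : Set (Fin n → ℝ)) (S C : ℝ) (w : ℝ → (Fin n → ℝ) → ℝ) :
    Prop where
  cont : ContinuousOn (fun p : ℝ × (Fin n → ℝ) => w p.1 p.2) (Ioc 0 S ×ˢ Ω)
  diff : ∀ t ∈ Ioo 0 S, ∀ x ∈ Ω, ParabolicDiffAt w t x
  nonneg : ∀ t ∈ Ioo 0 S, ∀ x ∈ Ω, 0 ≤ w t x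
  supersol : ∀ t ∈ Ioo 0 S, ∀ x ∈ Ω, 0 ≤ timeDeriv w t x - laplacian w t x + C * w t x

/-- The region `|x - y|² ≤ ρ(t)`, `s ≤ t ≤ T`, on which a radial barrier is compared with a
supersolution. -/
def movingBall (ρ : ℝ → ℝ) (y : Fin n → ℝ) (s T : ℝ) : Set (ℝ × (Fin n → ℝ)) :=
  {p | p.1 ∈ Icc s T ∧ sqDist y p.2 ≤ ρ p.1}

theorem isCompact_movingBall {ρ : ℝ → ℝ} (hρ : Continuous ρ) (y : Fin n → ℝ) (s T : ℝ) :
    IsCompact (movingBall ρ y s T) := by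
  obtain ⟨M, hM⟩ := isCompact_Icc.bddAbove_image (hρ.continuousOn (s := Icc s T))
  have hsqDist := (contDiff_sqDist y).continuous
  refine (isCompact_Icc.prod (isCompact_closedBall y √(max M 0))).of_isClosed_subset
    ((isClosed_Icc.preimage continuous_fst).inter
      (isClosed_le (hsqDist.comp continuous_snd) (hρ.comp continuous_fst))) fun p hp => ⟨hp.1, ?_⟩
  refine dist_le_of_sqDist_le (Real.sqrt_nonneg _) ?_
  rw [Real.sq_sqrt (le_max_right M 0)]
  exact hp.2.trans ((hM (mem_image_of_mem ρ hp.1)).trans (le_max_left M 0))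

theorem mem_parabolicInterior_movingBall {ρ : ℝ → ℝ} (hρ : Continuous ρ) {y x : Fin n → ℝ}
    {s t T : ℝ} (hst : s < t) (htT : t ≤ T) (hx : sqDist y x < ρ t) :
    (t, x) ∈ parabolicInterior (movingBall ρ y s T) := by
  constructor
  · filter_upwards [nhdsWithin_le_nhds (lt_mem_nhds hst),
      nhdsWithin_le_nhds (hρ.continuousAt.eventually_const_lt hx), self_mem_nhdsWithin]
      with τ hsτ hxτ hτt using ⟨⟨hsτ.le, hτt.trans htT⟩, hxτ.le⟩
  · filter_upwards [(contDiff_sqDist y).continuous.continuousAt.eventually_lt_const hx]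
      with z hz using ⟨⟨hst.le, htT⟩, hz.le⟩

namespace IsNonnegSupersolution

variable {Ω : Set (Fin n → ℝ)} {S C s T : ℝ} {w : ℝ → (Fin n → ℝ) → ℝ} {x y : Fin n → ℝ}

theorem radialBarrier_le (hw : IsNonnegSupersolution Ω S C w) (hC : 0 ≤ C) {A ρ : ℝ → ℝ}
    (hA : ContDiff ℝ 2 A) (hρ : ContDiff ℝ 2 ρ) (hs : 0 < s) (hT : T < S)
    (hΩ : ∀ t x, (t, x) ∈ movingBall ρ y s T → x ∈ Ω)
    (hsub : ∀ t x, s ≤ t → timeDeriv (radialBarrier A ρ y) t x -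
      laplacian (radialBarrier A ρ y) t x + C * radialBarrier A ρ y t x < 0)
    (hinit : ∀ x, sqDist y x ≤ ρ s → radialBarrier A ρ y s x ≤ w s x) :
    ∀ t x, (t, x) ∈ movingBall ρ y s T → radialBarrier A ρ y t x ≤ w t x := by
  have hφ := contDiff_radialBarrier hA hρ y
  have htime {t : ℝ} (ht : t ∈ Icc s T) : t ∈ Ioo 0 S := ⟨hs.trans_le ht.1, ht.2.trans_lt hT⟩
  refine le_of_parabolic_comparison (isCompact_movingBall hρ.continuous y s T) hC
    ((hw.cont.mono fun p hp => ⟨Ioo_subset_Ioc_self (htime hp.1), hΩ _ _ hp⟩).sub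
      hφ.continuous.continuousOn) fun t x hp hlt => ?_
  have hxΩ := hΩ t x hp
  obtain ⟨ht, hx⟩ := hp
  have hst : s < t := by
    refine ht.1.lt_of_ne ?_
    rintro rfl
    exact (hinit x hx).not_gt hlt
  have hx' : sqDist y x < ρ t := by
    refine lt_of_le_of_ne hx fun hlateral => (hw.nonneg t (htime ht) x hxΩ).not_gt ?_
    simpa [radialBarrier, hlateral] using hlt
  exact ⟨mem_parabolicInterior_movingBall hρ.continuous hst ht.2 hx',
    hw.diff t (htime ht) x hxΩ, .of_contDiff hφ t x,
    (hsub t x hst.le).trans_le (hw.supersol t (htime ht) x hxΩ)⟩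

-- The equation is known only before time `S`, so the case `T = S` needs a limit.
theorem radialBarrier_le_of_le (hw : IsNonnegSupersolution Ω S C w) (hC : 0 ≤ C) {A ρ : ℝ → ℝ}
    (hA : ContDiff ℝ 2 A) (hρ : ContDiff ℝ 2 ρ) (hs : 0 < s) (hsT : s < T) (hT : T ≤ S)
    (hΩ : ∀ t x, (t, x) ∈ movingBall ρ y s T → x ∈ Ω)
    (hsub : ∀ t x, s ≤ t → timeDeriv (radialBarrier A ρ y) t x -
      laplacian (radialBarrier A ρ y) t x + C * radialBarrier A ρ y t x < 0)
    (hinit : ∀ x, sqDist y x ≤ ρ s → radialBarrier A ρ y s x ≤ w s x) (hx : sqDist y x < ρ T) :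
    radialBarrier A ρ y T x ≤ w T x := by
  have hxΩ : x ∈ Ω := hΩ T x ⟨⟨hsT.le, le_rfl⟩, hx.le⟩
  have hbefore : ∀ᶠ τ in 𝓝[<] T, radialBarrier A ρ y τ x ≤ w τ x := by
    filter_upwards [Ioo_mem_nhdsLT hsT,
      nhdsWithin_le_nhds (hρ.continuous.continuousAt.eventually_const_lt hx)] with τ hτ hxτ
    exact hw.radialBarrier_le hC hA hρ hs (hτ.2.trans_le hT)
      (fun t x h => hΩ t x ⟨Icc_subset_Icc_right hτ.2.le h.1, h.2⟩) hsub hinit τ x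
      ⟨⟨hτ.1.le, le_rfl⟩, hxτ.le⟩
  have hφ : Tendsto (fun τ => radialBarrier A ρ y τ x) (𝓝[<] T) (𝓝 (radialBarrier A ρ y T x)) :=
    (((contDiff_radialBarrier hA hρ y).continuous.comp (Continuous.prodMk_left x)).tendsto
      T).mono_left nhdsWithin_le_nhds
  have hwT : Tendsto (fun τ => w τ x) (𝓝[<] T) (𝓝 (w T x)) := by
    have hline : ContinuousOn (fun τ => w τ x) (Ioc 0 S) :=
      hw.cont.comp (Continuous.prodMk_left x).continuousOn fun τ hτ => ⟨hτ, hxΩ⟩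
    refine (hline T ⟨hs.trans hsT, hT⟩).tendsto.mono_left (nhdsWithin_le_iff.2 ?_)
    filter_upwards [Ioo_mem_nhdsLT (hs.trans hsT)] with τ hτ using ⟨hτ.1, hτ.2.le.trans hT⟩
  exact le_of_tendsto_of_tendsto hφ hwT hbefore

theorem exists_forall_mul_sq_le (hw : IsNonnegSupersolution Ω S C w) (hΩ : IsOpen Ω)
    (hs : s ∈ Ioo 0 S) (hy : y ∈ Ω) (hpos : 0 < w s y) {M : ℝ} (hM : 0 < M) :
    ∃ ε > 0, ε < M ∧ ∃ κ > 0, ∀ x, sqDist y x ≤ ε → κ * ε ^ 2 ≤ w s x := by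
  have hslice : ContinuousAt (w s) y :=
    (hw.cont.continuousAt (prod_mem_nhds (Ioc_mem_nhds hs.1 hs.2) (hΩ.mem_nhds hy))).comp
      (f := fun x => (s, x)) (by fun_prop)
  obtain ⟨m, hm, hnear⟩ := exists_eventually_sqDist_lt_of_mem_nhds
    (hslice.eventually_const_lt (half_lt_self hpos))
  obtain ⟨ε, hε, hεmM⟩ := exists_between (lt_min hm hM)
  refine ⟨ε, hε, hεmM.trans_le (min_le_right _ _), w s y / 2 / ε ^ 2, by positivity, fun x hx => ?_⟩
  rw [div_mul_cancel₀ _ (by positivity)]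
  exact (hnear.self_of_nhds.2 x (hx.trans (hεmM.le.trans (min_le_left _ _)))).le

theorem pos_of_sqDist_lt (hw : IsNonnegSupersolution Ω S C w) (hC : 0 ≤ C) (hΩ : IsOpen Ω)
    {t M : ℝ} (hs : s ∈ Ioo 0 S) (ht : t ∈ Ioc s S) (hball : ∀ z, sqDist y z ≤ M → z ∈ Ω)
    (hx : sqDist y x < M) (hpos : 0 < w s y) : 0 < w t x := by
  have hM : 0 < M := (sqDist_nonneg y x).trans_lt hx
  have hy : y ∈ Ω := hball y (by rw [sqDist_self]; exact hM.le)
  obtain ⟨ε, hε, hεM, κ, hκ, hwκ⟩ := hw.exists_forall_mul_sq_le hΩ hs hy hpos hM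
  have hts : 0 < t - s := sub_pos.2 ht.1
  obtain ⟨a, ha, haM⟩ : ∃ a ≥ 0, ε + a * (t - s) = M :=
    ⟨(M - ε) / (t - s), div_nonneg (sub_pos.2 hεM).le hts.le, by field_simp; ring⟩
  obtain ⟨μ, hμ⟩ := exists_radialBarrier_strictSubsolution n C s hε ha
  let A : ℝ → ℝ := fun τ => κ * Real.exp (-μ * (τ - s))
  let ρ : ℝ → ℝ := fun τ => ε + a * (τ - s)
  have hxρ : sqDist y x < ρ t := hx.trans_eq haM.symm
  have hΩρ (τ : ℝ) (z : Fin n → ℝ) (h : (τ, z) ∈ movingBall ρ y s t) : z ∈ Ω := by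
    refine hball z (h.2.trans ?_)
    rw [← haM]
    exact add_le_add_right (mul_le_mul_of_nonneg_left (sub_le_sub_right h.1.2 s) ha) ε
  have hinit (z : Fin n → ℝ) (hz : sqDist y z ≤ ρ s) : radialBarrier A ρ y s z ≤ w s z := by
    have hρs : ρ s = ε := by simp [ρ]
    have hAs : A s = κ := by simp [A]
    rw [hρs] at hz
    refine le_trans ?_ (hwκ z hz)
    rw [radialBarrier, hρs, hAs]
    have hle : ε - sqDist y z ≤ ε := sub_le_self ε (sqDist_nonneg y z)
    exact mul_le_mul_of_nonneg_left (pow_le_pow_left₀ (sub_nonneg.2 hz) hle 2) hκ.le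
  have hle : radialBarrier A ρ y t x ≤ w t x :=
    hw.radialBarrier_le_of_le hC (by fun_prop) (by fun_prop) hs.1 ht.1 ht.2 hΩρ
      (fun τ z => hμ κ hκ y τ z) hinit hxρ
  have hbarrier : 0 < radialBarrier A ρ y t x :=
    mul_pos (mul_pos hκ (Real.exp_pos _)) (pow_pos (sub_pos.2 hxρ) 2)
  exact hbarrier.trans_le hle

theorem pos_of_isPreconnected (hw : IsNonnegSupersolution Ω S C w) (hC : 0 ≤ C) (hΩ : IsOpen Ω)
    {U : Set (Fin n → ℝ)} (hU : IsPreconnected U) (hUΩ : U ⊆ Ω) (hy : y ∈ U) (hx : x ∈ U) {t : ℝ}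
    (hs : s ∈ Ioo 0 S) (ht : t ∈ Ioc s S) (hpos : 0 < w s y) : 0 < w t x := by
  let Spreads (y x : Fin n → ℝ) : Prop :=
    ∀ s ∈ Ioo 0 S, ∀ t ∈ Ioc s S, 0 < w s y → 0 < w t x
  suffices Spreads y x from this s hs t ht hpos
  refine hU.induction₂' Spreads (fun z hz => ?_) (fun a b c _ _ _ hab hbc => ?_) hy hx
  · obtain ⟨M, -, hnear⟩ := exists_eventually_sqDist_lt_of_mem_nhds (hΩ.mem_nhds (hUΩ hz))
    filter_upwards [nhdsWithin_le_nhds hnear] with v ⟨hzv, hball⟩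
    exact ⟨fun s hs t ht => hw.pos_of_sqDist_lt hC hΩ hs ht hnear.self_of_nhds.2 hzv,
      fun s hs t ht => hw.pos_of_sqDist_lt hC hΩ hs ht hball (sqDist_comm z v ▸ hzv)⟩
  · intro s hs t ht ha
    obtain ⟨m, hsm, hmt⟩ := exists_between ht.1
    have hmS : m < S := hmt.trans_le ht.2
    exact hbc m ⟨hs.1.trans hsm, hmS⟩ t ⟨hmt, ht.2⟩ (hab s hs m ⟨hsm, hmS.le⟩ ha)

theorem pos_of_pos_frontier [NeZero n] (hw : IsNonnegSupersolution Ω S C w) (hC : 0 ≤ C)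
    (hΩ : IsOpen Ω) (hΩb : Bornology.IsBounded Ω)
    (hcont : ContinuousOn (fun p : ℝ × (Fin n → ℝ) => w p.1 p.2) (Icc 0 S ×ˢ closure Ω)) {δ t : ℝ}
    (hδ : δ ∈ Ioc 0 S) (hfrontier : ∀ z ∈ frontier Ω, 0 < w δ z) (ht : t ∈ Icc δ S) (hx : x ∈ Ω) :
    0 < w t x := by
  set U := connectedComponentIn Ω x
  have hUΩ : U ⊆ Ω := connectedComponentIn_subset Ω x
  obtain ⟨z, hzΩ, hzU⟩ := exists_mem_frontier_mem_closure_connectedComponentIn hΩ hΩb hx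
  have hmem : (δ, z) ∈ closure (Ioo 0 δ ×ˢ U) := by
    rw [closure_prod_eq, closure_Ioo hδ.1.ne]
    exact ⟨right_mem_Icc.2 hδ.1.le, hzU⟩
  have hcyl : Ioo 0 δ ×ˢ U ⊆ Icc 0 S ×ˢ closure Ω :=
    prod_mono (Ioo_subset_Icc_self.trans (Icc_subset_Icc_right hδ.2)) (hUΩ.trans subset_closure)
  obtain ⟨⟨s, y⟩, ⟨hs, hy⟩, hpos⟩ := exists_pos_of_mem_closure hmem
    ((hcont (δ, z) ⟨⟨hδ.1.le, hδ.2⟩, hzΩ.1⟩).mono hcyl) (hfrontier z hzΩ)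
  exact hw.pos_of_isPreconnected hC hΩ isPreconnected_connectedComponentIn hUΩ hy
    (mem_connectedComponentIn hx) ⟨hs.1, hs.2.trans_le hδ.2⟩ ⟨hs.2.trans_le ht.1, ht.2⟩ hpos

end IsNonnegSupersolution

theorem ParabolicRegular.isNonnegSupersolution {Ω : Set (Fin n → ℝ)} (hΩ : IsOpen Ω) {S C : ℝ}
    {q w : ℝ → (Fin n → ℝ) → ℝ} (hreg : ParabolicRegular Ω S w)
    (hqC : ∀ t ∈ Ioo 0 S, ∀ x ∈ Ω, q t x ≤ C)
    (hsuper : ∀ t ∈ Ioo 0 S, ∀ x ∈ Ω, 0 ≤ timeDeriv w t x - laplacian w t x + q t x * w t x)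
    (hw0 : ∀ t ∈ Ioo 0 S, ∀ x ∈ Ω, 0 ≤ w t x) : IsNonnegSupersolution Ω S C w where
  cont := hreg.cont.mono (prod_mono Ioc_subset_Icc_self subset_closure)
  diff _ ht _ hx := hreg.parabolicDiffAt hΩ ht hx
  nonneg := hw0
  supersol t ht x hx := (hsuper t ht x hx).trans <|
    add_le_add_right (mul_le_mul_of_nonneg_right (hqC t ht x hx) (hw0 t ht x hx)) _

end Paper

theorem statement2_general {n : ℕ} [NeZero n] (Ω : Set (Fin n → ℝ)) (hΩo : IsOpen Ω)
    (hΩb : Bornology.IsBounded Ω) (hΩne : Ω.Nonempty)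
    (S δ₁ : ℝ) (hδ₁ : 0 < δ₁) (hδ₁S : δ₁ ≤ S)
    (q : ℝ → (Fin n → ℝ) → ℝ)
    (hqb : ∃ C, ∀ t ∈ Ioo 0 S, ∀ x ∈ Ω, q t x ≤ C)
    (w : ℝ → (Fin n → ℝ) → ℝ)
    (hreg : ParabolicRegular Ω S w)
    (hsuper : ∀ t ∈ Ioo 0 S, ∀ x ∈ Ω,
      0 ≤ timeDeriv w t x - laplacian w t x + q t x * w t x)
    (hw0 : ∀ t ∈ Ioo 0 S, ∀ x ∈ Ω, 0 ≤ w t x)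
    (hlat : ∀ t ∈ Icc δ₁ S, ∀ x ∈ frontier Ω, 0 < w t x) :
    0 < sInf ((fun p : ℝ × (Fin n → ℝ) => w p.1 p.2) '' (Icc δ₁ S ×ˢ closure Ω)) := by
  obtain ⟨C, hC⟩ := hqb
  have hw : IsNonnegSupersolution Ω S (max C 0) w := hreg.isNonnegSupersolution hΩo
    (fun t ht x hx => (hC t ht x hx).trans (le_max_left C 0)) hsuper hw0
  refine sInf_image_pos_of_isCompact (isCompact_Icc.prod hΩb.isCompact_closure)
    ((nonempty_Icc.2 hδ₁S).prod hΩne.closure)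
    (hreg.cont.mono (prod_mono (Icc_subset_Icc_left hδ₁.le) subset_rfl)) ?_
  rintro ⟨t, x⟩ ⟨ht, hx⟩
  rw [closure_eq_self_union_frontier] at hx
  rcases hx with hxΩ | hxfrontier
  · exact hw.pos_of_pos_frontier (le_max_right C 0) hΩo hΩb hreg.cont ⟨hδ₁, hδ₁S⟩
      (hlat δ₁ (left_mem_Icc.2 hδ₁S)) ht hxΩ
  · exact hlat t ht x hxfrontier

/-- strict positivity of the infimum: if `w ≥ 0` solves
`∂ₜw − Δw + q w = 0` in `(0,S) × Ω`, vanishes at `t = 0` and equals the constant `δ₂ > 0` on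
`[δ₁,S] × ∂Ω`, then the infimum of `w` over `[δ₁,S] × cl Ω` is strictly positive. -/
theorem statement2 {n : ℕ} (hn : 2 ≤ n) (Ω : Set (Fin n → ℝ)) (hΩo : IsOpen Ω)
    (hΩb : Bornology.IsBounded Ω) (hΩc : IsConnected Ω)
    (S δ₁ δ₂ : ℝ) (hS : 0 < S) (hδ₁ : 0 < δ₁) (hδ₁S : δ₁ < S) (hδ₂ : 0 < δ₂)
    (q : ℝ → (Fin n → ℝ) → ℝ)
    (hqc : ContinuousOn (fun p : ℝ × (Fin n → ℝ) => q p.1 p.2) (Ioo 0 S ×ˢ Ω))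
    (hqb : ∃ C, ∀ t ∈ Ioo 0 S, ∀ x ∈ Ω, |q t x| ≤ C)
    (w : ℝ → (Fin n → ℝ) → ℝ)
    (hreg : ParabolicRegular Ω S w)
    (heqn : ∀ t ∈ Ioo 0 S, ∀ x ∈ Ω,
      timeDeriv w t x - laplacian w t x + q t x * w t x = 0)
    (hw0 : ∀ t ∈ Icc 0 S, ∀ x ∈ closure Ω, 0 ≤ w t x)
    (hinit : ∀ x ∈ closure Ω, w 0 x = 0)
    (hlat : ∀ t ∈ Icc δ₁ S, ∀ x ∈ frontier Ω, w t x = δ₂) :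
    0 < sInf ((fun p : ℝ × (Fin n → ℝ) => w p.1 p.2) '' (Icc δ₁ S ×ˢ closure Ω)) := by
  obtain ⟨C, hC⟩ := hqb
  have : NeZero n := ⟨by lia⟩
  exact statement2_general Ω hΩo hΩb hΩc.nonempty S δ₁ hδ₁ hδ₁S.le q
    ⟨C, fun t ht x hx => le_of_abs_le (hC t ht x hx)⟩ w hreg
    (fun t ht x hx => (heqn t ht x hx).ge)
    (fun t ht x hx => hw0 t (Ioo_subset_Icc_self ht) x (subset_closure hx))
    fun t ht x hx => (hlat t ht x hx).symm ▸ hδ₂
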